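/- Let A be a commutative ring and n ≥ 3. If g(X) ∈ GL_n(A[X]) satisfies g(0) = 1 and for every maximal ideal m of A the image of g(X) in GL_n(A_m[X]) lies in E_n(A_m[X]), then g(X) ∈ E_n(A[X]). -/

import Mathlib

/-- The elementary subgroup `E_n(R) ⊆ GL_n(R)`. -/
def elemGL (n : ℕ) (R : Type*) [CommRing R] : Subgroup (GL (Fin n) R) :=
  Subgroup.closure {g | ∃ (i j : Fin n) (a : R), i ≠ j ∧
    (g : Matrix (Fin n) (Fin n) R) = Matrix.transvection i j a}

/-- The homomorphism `GL_n(R) → GL_n(S)` induced by a ring homomorphism. -/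
def glMap {n : ℕ} {R S : Type*} [CommRing R] [CommRing S] (f : R →+* S) :
    GL (Fin n) R →* GL (Fin n) S := Units.map (RingHom.mapMatrix f).toMonoidHom

/-!
Put `h(Y, Z) = g(Y + Z) g(Y)⁻¹`, which is the identity at `Z = 0`. Over a localization of `A` where
`g` is elementary so is `h`, and there `h` is a product of conjugates of transvections with entry
divisible by `Z` by matrices that do not involve `Z`. Such a conjugate has the form `1 + Z v wᵀ`
with `w` orthogonal to a unimodular vector `v`. As `w` is a combination of the Koszul relations
`v_l e_k - v_k e_l`, the conjugate is a product of matrices `1 + c v (v_l e_k - v_k e_l)ᵀ`; for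
`n ≥ 3` these are elementary for any `v` and `c`, unimodular or not, which makes it possible to
clear denominators by a substitution `Z ↦ s Z`. So `h(Y, s Z)` is elementary over `A[Y, Z]` for some
`s` outside any given maximal ideal.

It follows that the ideal of those `a` for which the class of `g(b X)` modulo elementary matrices
depends only on `b` modulo `a` lies in no maximal ideal. Hence it contains `1`, and `b = 0` can be
compared with `b = 1`.
-/

open Polynomial Matrix

section RankOne

variable {ι R S : Type*} [DecidableEq ι] [CommRing R] [CommRing S]

lemma transvection_eq_one_add_vecMulVec (i j : ι) (a b : R) :
    transvection i j (a * b) = 1 + vecMulVec (Pi.single i a) (Pi.single j b) := by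
  ext k l
  simp only [transvection, Matrix.add_apply, Matrix.single_apply, vecMulVec_apply, Pi.single_apply,
    ite_and, mul_ite, ite_mul, mul_zero, zero_mul, eq_comm]
  split_ifs <;> rfl

lemma map_transvection (f : R →+* S) (i j : ι) (a : R) :
    (transvection i j a).map f = transvection i j (f a) := by
  rw [transvection, transvection, Matrix.map_add _ (map_add f),
    Matrix.map_one _ (map_zero f) (map_one f), Matrix.map_single]

lemma map_one_add_vecMulVec (f : R →+* S) (v w : ι → R) :
    (1 + vecMulVec v w).map f = 1 + vecMulVec (f ∘ v) (f ∘ w) := by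
  rw [Matrix.map_add _ (map_add f), Matrix.map_one _ (map_zero f) (map_one f)]
  congr 1
  ext i j
  exact map_mul f _ _

variable [Fintype ι]

lemma one_add_vecMulVec_add_right {v w : ι → R} (h : w ⬝ᵥ v = 0) (w' : ι → R) :
    1 + vecMulVec v (w + w') = (1 + vecMulVec v w) * (1 + vecMulVec v w') := by
  rw [mul_add, add_mul, add_mul, vecMulVec_mul_vecMulVec, h, vecMulVec_add, zero_smul,
    vecMulVec_zero]
  simp only [one_mul, mul_one]
  abel

lemma one_add_vecMulVec_add_left {v' w : ι → R} (h : w ⬝ᵥ v' = 0) (v : ι → R) :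
    1 + vecMulVec (v + v') w = (1 + vecMulVec v w) * (1 + vecMulVec v' w) := by
  rw [mul_add, add_mul, add_mul, vecMulVec_mul_vecMulVec, h, add_vecMulVec, zero_smul,
    vecMulVec_zero]
  simp only [one_mul, mul_one]
  abel

lemma one_add_vecMulVec_sum_right_mem (H : Submonoid (Matrix ι ι R)) {κ : Type*} (s : Finset κ)
    (v : ι → R) (w : κ → ι → R) (h0 : ∀ k ∈ s, w k ⬝ᵥ v = 0)
    (hH : ∀ k ∈ s, 1 + vecMulVec v (w k) ∈ H) : 1 + vecMulVec v (∑ k ∈ s, w k) ∈ H := by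
  refine (Finset.sum_induction w (fun x ↦ x ⬝ᵥ v = 0 ∧ 1 + vecMulVec v x ∈ H)
    (fun x y hx hy ↦ ⟨?_, ?_⟩) ⟨zero_dotProduct v, ?_⟩ fun k hk ↦ ⟨h0 k hk, hH k hk⟩).2
  · rw [add_dotProduct, hx.1, hy.1, add_zero]
  · exact one_add_vecMulVec_add_right hx.1 y ▸ mul_mem hx.2 hy.2
  · rw [vecMulVec_zero, add_zero]
    exact one_mem H

lemma one_add_vecMulVec_sum_left_mem (H : Submonoid (Matrix ι ι R)) {κ : Type*} (s : Finset κ)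
    (v : κ → ι → R) (w : ι → R) (h0 : ∀ k ∈ s, w ⬝ᵥ v k = 0)
    (hH : ∀ k ∈ s, 1 + vecMulVec (v k) w ∈ H) : 1 + vecMulVec (∑ k ∈ s, v k) w ∈ H := by
  refine (Finset.sum_induction v (fun x ↦ w ⬝ᵥ x = 0 ∧ 1 + vecMulVec x w ∈ H)
    (fun x y hx hy ↦ ⟨?_, ?_⟩) ⟨dotProduct_zero w, ?_⟩ fun k hk ↦ ⟨h0 k hk, hH k hk⟩).2
  · rw [dotProduct_add, hx.1, hy.1, add_zero]
  · exact one_add_vecMulVec_add_left hy.1 x ▸ mul_mem hx.2 hy.2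
  · rw [zero_vecMulVec, add_zero]
    exact one_mem H

lemma one_add_vecMulVec_eq_commutator {p q r w : ι → R} (hqp : q ⬝ᵥ p = 0) (hwr : w ⬝ᵥ r = 0)
    (hqr : q ⬝ᵥ r = 1) (hwp : w ⬝ᵥ p = 0) :
    1 + vecMulVec p w = (1 + vecMulVec p q) * (1 + vecMulVec r w) *
      (1 + vecMulVec (-p) q) * (1 + vecMulVec (-r) w) := by
  simp only [mul_add, add_mul, vecMulVec_mul_vecMulVec, hqp, hwr, hqr, hwp, neg_vecMulVec,
    mul_neg, neg_mul, mul_one, one_mul, zero_smul, vecMulVec_zero, one_smul, zero_mul]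
  abel

lemma conj_transvection (γ : GL ι R) (i j : ι) (a : R) :
    (γ : Matrix ι ι R) * transvection i j a * (γ⁻¹ : GL ι R) =
      1 + vecMulVec ((γ : Matrix ι ι R).col i) (a • ((γ⁻¹ : GL ι R) : Matrix ι ι R).row j) := by
  rw [← one_mul a, transvection_eq_one_add_vecMulVec, mul_add, mul_one, add_mul, Units.mul_inv,
    mul_vecMulVec, vecMulVec_mul, mulVec_single_one, single_vecMul, one_mul]

end RankOne

section Koszul

variable {ι R S : Type*} [DecidableEq ι] [CommRing R] [CommRing S]

/-- The Koszul relation `v_l e_k - v_k e_l` between the entries of `v`: these are the obvious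
vectors orthogonal to `v`, and they span all of them when `v` is unimodular. -/
def koszulRelation (v : ι → R) (k l : ι) : ι → R := Pi.single k (v l) - Pi.single l (v k)

lemma koszulRelation_dotProduct [Fintype ι] (v : ι → R) (k l : ι) :
    koszulRelation v k l ⬝ᵥ v = 0 := by
  simp [koszulRelation, sub_dotProduct, mul_comm]

lemma comp_koszulRelation (f : R →+* S) (v : ι → R) (k l : ι) :
    f ∘ koszulRelation v k l = koszulRelation (f ∘ v) k l := by
  ext i
  simp [koszulRelation, Pi.single_apply, apply_ite f]

lemma koszulRelation_smul (a : R) (v : ι → R) (k l : ι) :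
    koszulRelation (a • v) k l = a • koszulRelation v k l := by
  simp [koszulRelation, smul_sub, ← Pi.single_smul]

lemma map_one_add_vecMulVec_smul_koszulRelation (f : R →+* S) (v : ι → R) (c : R) (k l : ι) :
    (1 + vecMulVec v (c • koszulRelation v k l)).map f =
      1 + vecMulVec (f ∘ v) (f c • koszulRelation (f ∘ v) k l) := by
  rw [map_one_add_vecMulVec, ← comp_koszulRelation]
  congr 2
  ext i
  exact map_mul f _ _

lemma vecMulVec_smul_smul_koszulRelation_smul (a : R) (v : ι → R) (c : R) (k l : ι) :
    vecMulVec (a • v) (c • koszulRelation (a • v) k l) =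
      vecMulVec v ((a * a * c) • koszulRelation v k l) := by
  simp only [koszulRelation_smul, smul_vecMulVec, vecMulVec_smul, smul_smul]
  ring_nf

lemma eq_sum_smul_koszulRelation [Fintype ι] {u v w : ι → R} (huv : u ⬝ᵥ v = 1)
    (hwv : w ⬝ᵥ v = 0) :
    w = ∑ x : ι × ι, (w x.1 * u x.2) • koszulRelation v x.1 x.2 := by
  ext i
  calc w i = w i * (u ⬝ᵥ v) - u i * (w ⬝ᵥ v) := by rw [huv, hwv, mul_one, mul_zero, sub_zero]
    _ = (∑ l, w i * u l * v l) - ∑ k, w k * u i * v k := by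
      simp only [dotProduct, Finset.mul_sum]
      congr 1 <;> exact Finset.sum_congr rfl fun _ _ ↦ by ring
    _ = (∑ x : ι × ι, (w x.1 * u x.2) • koszulRelation v x.1 x.2) i := by
      rw [Fintype.sum_prod_type]
      simp only [koszulRelation, Finset.sum_apply, Pi.smul_apply, Pi.sub_apply, smul_eq_mul,
        mul_sub, Finset.sum_sub_distrib, Pi.single_apply, mul_ite, mul_zero]
      rw [Finset.sum_comm]
      simp

end Koszul

section Elementary

variable {n : ℕ} {R S T : Type*} [CommRing R] [CommRing S] [CommRing T]

lemma coe_glMap (f : R →+* S) (g : GL (Fin n) R) :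
    (glMap f g : Matrix (Fin n) (Fin n) S) = (g : Matrix (Fin n) (Fin n) R).map f := rfl

lemma glMap_glMap (f : R →+* S) (h : S →+* T) (g : GL (Fin n) R) :
    glMap h (glMap f g) = glMap (h.comp f) g := rfl

lemma glMap_mem_elemGL (f : R →+* S) {g : GL (Fin n) R} (hg : g ∈ elemGL n R) :
    glMap f g ∈ elemGL n S := by
  suffices elemGL n R ≤ (elemGL n S).comap (glMap f) from this hg
  refine (Subgroup.closure_le _).2 fun x ⟨i, j, a, hij, hx⟩ ↦
    Subgroup.subset_closure ⟨i, j, f a, hij, ?_⟩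
  rw [coe_glMap, hx, map_transvection]

lemma transvection_mem_elemGL {i j : Fin n} (hij : i ≠ j) (a : R) :
    transvection i j a ∈ (elemGL n R).ofUnits :=
  let t : TransvectionStruct (Fin n) R := ⟨i, j, hij, a⟩
  Subgroup.mem_ofUnits _ (y := ⟨t.toMatrix, t.inv.toMatrix, t.mul_inv, t.inv_mul⟩)
    (Subgroup.subset_closure ⟨i, j, a, hij, rfl⟩) rfl

lemma one_add_vecMulVec_single_single_mem_elemGL {i j : Fin n} {a b : R}
    (h : i = j → a * b = 0) :
    1 + vecMulVec (Pi.single i a) (Pi.single j b) ∈ (elemGL n R).ofUnits := by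
  rw [← transvection_eq_one_add_vecMulVec]
  by_cases hij : i = j
  · rw [h hij, transvection_zero]
    exact one_mem _
  · exact transvection_mem_elemGL hij _

lemma one_add_vecMulVec_single_right_mem_elemGL {v : Fin n → R} {j : Fin n} (hv : v j = 0)
    (b : R) : 1 + vecMulVec v (Pi.single j b) ∈ (elemGL n R).ofUnits := by
  rw [← Finset.univ_sum_single v]
  refine one_add_vecMulVec_sum_left_mem _ _ _ _ (fun i _ ↦ ?_) fun i _ ↦
    one_add_vecMulVec_single_single_mem_elemGL fun h ↦ by rw [h, hv, zero_mul]
  obtain rfl | h := eq_or_ne i j <;> simp [*]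

lemma one_add_vecMulVec_single_left_mem_elemGL {w : Fin n → R} {i : Fin n} (hw : w i = 0)
    (a : R) : 1 + vecMulVec (Pi.single i a) w ∈ (elemGL n R).ofUnits := by
  rw [← Finset.univ_sum_single w]
  refine one_add_vecMulVec_sum_right_mem _ _ _ _ (fun j _ ↦ ?_) fun j _ ↦
    one_add_vecMulVec_single_single_mem_elemGL fun h ↦ by rw [← h, hw, mul_zero]
  obtain rfl | h := eq_or_ne i j <;> simp [*]

lemma one_add_vecMulVec_mem_elemGL_of_apply_eq_zero {p w : Fin n → R} {m : Fin n}
    (hp : p m = 0) (hw : w m = 0) (hwp : w ⬝ᵥ p = 0) :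
    1 + vecMulVec p w ∈ (elemGL n R).ofUnits := by
  rw [one_add_vecMulVec_eq_commutator (q := Pi.single m 1) (r := Pi.single m 1) (by simp [hp])
    (by simp [hw]) (by simp) hwp, ← Pi.single_neg]
  exact mul_mem (mul_mem (mul_mem (one_add_vecMulVec_single_right_mem_elemGL hp 1)
    (one_add_vecMulVec_single_left_mem_elemGL hw 1))
    (one_add_vecMulVec_single_right_mem_elemGL (by simp [hp]) 1))
    (one_add_vecMulVec_single_left_mem_elemGL hw _)

lemma one_add_vecMulVec_smul_koszulRelation_mem_elemGL (hn : 3 ≤ n) (v : Fin n → R) (c : R)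
    (k l : Fin n) : 1 + vecMulVec v (c • koszulRelation v k l) ∈ (elemGL n R).ofUnits := by
  obtain rfl | hkl := eq_or_ne k l
  · simp [koszulRelation]
  obtain ⟨m, hmk, hml⟩ := Fin.exists_ne_and_ne_of_two_lt k l hn
  -- `p` is the part of `v` supported on `{k, l}`; since `n ≥ 3`, both `p` and the relation
  -- vanish at some further index `m`.
  set p : Fin n → R := Pi.single k (v k) + Pi.single l (v l) with hp
  have hpk : (v - p) k = 0 := by simp [hp, hkl]
  have hpl : (v - p) l = 0 := by simp [hp, hkl.symm]
  have hw : c • koszulRelation v k l = Pi.single k (c * v l) + Pi.single l (-(c * v k)) := by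
    simp [koszulRelation, sub_eq_add_neg, ← Pi.single_smul, Pi.single_neg]
  have hwp : (c • koszulRelation v k l) ⬝ᵥ p = 0 := by
    simp only [hw, hp, dotProduct_add, dotProduct_single, Pi.add_apply, Pi.single_eq_same,
      Pi.single_eq_of_ne hkl, Pi.single_eq_of_ne hkl.symm, add_zero, zero_add]
    ring
  rw [← sub_add_cancel v p, one_add_vecMulVec_add_left (by simpa using hwp), sub_add_cancel]
  refine mul_mem ?_ (one_add_vecMulVec_mem_elemGL_of_apply_eq_zero (m := m) ?_ ?_ hwp)
  · rw [hw, one_add_vecMulVec_add_right (by rw [single_dotProduct, hpk, mul_zero])]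
    exact mul_mem (one_add_vecMulVec_single_right_mem_elemGL hpk _)
      (one_add_vecMulVec_single_right_mem_elemGL hpl _)
  · simp [hp, hmk, hml]
  · simp [koszulRelation, hmk, hml]

end Elementary

section Dilation

variable {R S : Type*} [CommRing R] [CommRing S]

/-- The substitution `X ↦ s X` on `R[X]`; for `s = 0` it sends a polynomial to its constant
term. -/
noncomputable def dilate (s : R) : R[X] →+* R[X] := compRingHom (C s * X)

@[simp] lemma dilate_C (s a : R) : dilate s (C a) = C a := C_comp

@[simp] lemma dilate_X (s : R) : dilate s X = C s * X := X_comp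

lemma coeff_dilate (s : R) (p : R[X]) (k : ℕ) : (dilate s p).coeff k = p.coeff k * s ^ k :=
  comp_C_mul_X_coeff

lemma dilate_comp_dilate (s t : R) : (dilate s).comp (dilate t) = dilate (s * t) := by
  ext a
  · simp
  · simp [mul_comm s t, mul_assoc]

lemma dilate_one : dilate (1 : R) = RingHom.id R[X] := by
  ext a <;> simp

lemma dilate_zero : dilate (0 : R) = C.comp (evalRingHom 0) := by
  ext a <;> simp

lemma mapRingHom_comp_dilate (f : R →+* S) (s : R) :
    (mapRingHom f).comp (dilate s) = (dilate (f s)).comp (mapRingHom f) := by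
  ext a <;> simp

variable {B : Type*} [CommRing B] [Algebra B R] (M : Submonoid B) [IsLocalization M R]

lemma exists_dilate_eq_of_map_eq {p q : B[X]}
    (h : p.map (algebraMap B R) = q.map (algebraMap B R)) (h0 : dilate 0 p = dilate 0 q) :
    ∃ t ∈ M, dilate t p = dilate t q := by
  let := Polynomial.algebra B R
  have : IsLocalization (M.map (C : B →+* B[X])) R[X] := Polynomial.isLocalization M R
  obtain ⟨⟨_, t, ht, rfl⟩, htpq⟩ :=
    (IsLocalization.eq_iff_exists (M.map (C : B →+* B[X])) R[X]).1 h
  refine ⟨t, ht, ext fun k ↦ ?_⟩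
  rw [coeff_dilate, coeff_dilate]
  cases k with
  | zero => simpa [coeff_dilate] using congrArg (coeff · 0) h0
  | succ k =>
    have hk : t * p.coeff (k + 1) = t * q.coeff (k + 1) := by
      simpa using congrArg (coeff · (k + 1)) htpq
    rw [pow_succ', ← mul_assoc, ← mul_assoc, mul_comm _ t, hk, mul_comm t]

lemma exists_forall_dilate_eq_of_map_eq {κ : Type*} [Finite κ] {p q : κ → B[X]}
    (h : ∀ i, (p i).map (algebraMap B R) = (q i).map (algebraMap B R))
    (h0 : ∀ i, dilate 0 (p i) = dilate 0 (q i)) :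
    ∃ t ∈ M, ∀ i, dilate t (p i) = dilate t (q i) := by
  classical
  cases nonempty_fintype κ
  choose t htM ht using fun i ↦ exists_dilate_eq_of_map_eq M (h i) (h0 i)
  refine ⟨∏ i, t i, prod_mem fun i _ ↦ htM i, fun i ↦ ?_⟩
  rw [← Finset.prod_erase_mul _ _ (Finset.mem_univ i), ← dilate_comp_dilate, RingHom.comp_apply,
    RingHom.comp_apply, ht i]

lemma exists_glMap_dilate_eq_of_map_eq {n : ℕ} {g h : GL (Fin n) B[X]}
    (hmap : glMap (mapRingHom (algebraMap B R)) g = glMap (mapRingHom (algebraMap B R)) h)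
    (h0 : glMap (dilate 0) g = glMap (dilate 0) h) :
    ∃ t ∈ M, glMap (dilate t) g = glMap (dilate t) h := by
  obtain ⟨t, ht, hgh⟩ := exists_forall_dilate_eq_of_map_eq M
    (p := fun x : Fin n × Fin n ↦ g x.1 x.2) (q := fun x ↦ h x.1 x.2)
    (fun x ↦ congrArg (fun γ : GL (Fin n) R[X] ↦ γ x.1 x.2) hmap)
    (fun x ↦ congrArg (fun γ : GL (Fin n) B[X] ↦ γ x.1 x.2) h0)
  exact ⟨t, ht, Units.ext (Matrix.ext fun i j ↦ hgh (i, j))⟩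

end Dilation

section ElementaryLifts

variable {n : ℕ} {B R : Type*} [CommRing B] [CommRing R] [Algebra B R]

/-- The group `{ε ∈ E_n(R[X]) | ε(0) = 1}`. -/
noncomputable def elemGLOneAtZero (n : ℕ) (R : Type*) [CommRing R] : Subgroup (GL (Fin n) R[X]) :=
  elemGL n R[X] ⊓ (glMap (dilate 0)).ker

lemma glMap_dilate_mem_elemGLOneAtZero (s : R) {g : GL (Fin n) R[X]}
    (hg : g ∈ elemGLOneAtZero n R) : glMap (dilate s) g ∈ elemGLOneAtZero n R := by
  refine ⟨glMap_mem_elemGL _ hg.1, ?_⟩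
  change glMap (dilate 0) (glMap (dilate s) g) = 1
  rw [glMap_glMap, dilate_comp_dilate, zero_mul]
  exact hg.2

lemma glMap_dilate_mul_mem_map {g : GL (Fin n) R[X]} {s : B}
    (hg : glMap (dilate (algebraMap B R s)) g ∈
      (elemGLOneAtZero n B).map (glMap (mapRingHom (algebraMap B R)))) (t : B) :
    glMap (dilate (algebraMap B R (t * s))) g ∈
      (elemGLOneAtZero n B).map (glMap (mapRingHom (algebraMap B R))) := by
  obtain ⟨ε, hε, hεg⟩ := hg
  refine ⟨glMap (dilate t) ε, glMap_dilate_mem_elemGLOneAtZero t hε, ?_⟩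
  rw [glMap_glMap, mapRingHom_comp_dilate, ← glMap_glMap, hεg, glMap_glMap, dilate_comp_dilate,
    map_mul]

/-- The matrices over `R[X]`, for `R` a localization of `B` at `M`, which after some substitution
`X ↦ s X` with `s ∈ M` lift to an elementary matrix over `B[X]` that is the identity at `X = 0`. -/
noncomputable def elemLifts (n : ℕ) (M : Submonoid B) (R : Type*) [CommRing R] [Algebra B R] :
    Subgroup (GL (Fin n) R[X]) where
  carrier := {g | ∃ s ∈ M, glMap (dilate (algebraMap B R s)) g ∈
    (elemGLOneAtZero n B).map (glMap (mapRingHom (algebraMap B R)))}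
  one_mem' := ⟨1, one_mem M, by rw [map_one]; exact one_mem _⟩
  mul_mem' := by
    rintro g h ⟨s, hs, hg⟩ ⟨t, ht, hh⟩
    refine ⟨t * s, mul_mem ht hs, ?_⟩
    rw [map_mul]
    exact mul_mem (glMap_dilate_mul_mem_map hg t) (mul_comm s t ▸ glMap_dilate_mul_mem_map hh s)
  inv_mem' := by
    rintro g ⟨s, hs, hg⟩
    exact ⟨s, hs, by rw [map_inv]; exact inv_mem hg⟩

variable (M : Submonoid B)

lemma mem_ofUnits_elemLifts {N : Matrix (Fin n) (Fin n) R[X]} (hN : IsUnit N) {s : B}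
    (hs : s ∈ M) {E : Matrix (Fin n) (Fin n) B[X]} (hE : E ∈ (elemGL n B[X]).ofUnits)
    (hE0 : E.map (dilate 0) = 1)
    (h : E.map (mapRingHom (algebraMap B R)) = N.map (dilate (algebraMap B R s))) :
    N ∈ (elemLifts n M R).ofUnits := by
  obtain ⟨ε, hε, rfl⟩ := hE
  exact Subgroup.mem_ofUnits _ (y := hN.unit)
    ⟨s, hs, ε, ⟨hε, Units.ext hE0⟩, Units.ext h⟩ hN.unit_spec

variable [IsLocalization M R]

lemma exists_mapRingHom_eq_C_mul (f : R[X]) :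
    ∃ t ∈ M, ∃ f' : B[X], mapRingHom (algebraMap B R) f' = C (algebraMap B R t) * f := by
  obtain ⟨t, ht, hf⟩ := IsLocalization.integerNormalization_spec M f
  exact ⟨t, ht, _, by rw [coe_mapRingHom, hf, Algebra.smul_def]; rfl⟩

lemma exists_algebraMap_comp_eq_smul {κ : Type*} [Finite κ] (v : κ → R) :
    ∃ s ∈ M, ∃ v' : κ → B, algebraMap B R ∘ v' = algebraMap B R s • v := by
  obtain ⟨⟨s, hs⟩, hv⟩ := IsLocalization.exist_integer_multiples_of_finite M v
  choose v' hv' using hv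
  exact ⟨s, hs, v', funext fun i ↦ (hv' i).trans (Algebra.smul_def _ _)⟩

lemma one_add_vecMulVec_X_mul_smul_koszulRelation_mem_elemLifts (hn : 3 ≤ n) (v : Fin n → R)
    (f : R[X]) (k l : Fin n) :
    1 + vecMulVec (C ∘ v) ((X * f) • koszulRelation (C ∘ v) k l) ∈
      (elemLifts n M R).ofUnits := by
  obtain ⟨s, hs, v', hv'⟩ := exists_algebraMap_comp_eq_smul M v
  obtain ⟨t, ht, f', hf'⟩ := exists_mapRingHom_eq_C_mul M f
  -- `v' = s v` enters quadratically and `f' = t f` linearly; the dilation of the factor `X` by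
  -- `t * s * s` makes up for all three denominators.
  set r := t * s * s
  have hunit : IsUnit (1 + vecMulVec (C ∘ v) ((X * f) • koszulRelation (C ∘ v) k l)) :=
    Subgroup.isUnit_of_mem_ofUnits _ <|
      one_add_vecMulVec_smul_koszulRelation_mem_elemGL hn (C ∘ v) (X * f) k l
  refine mem_ofUnits_elemLifts M hunit (mul_mem (mul_mem ht hs) hs)
    (one_add_vecMulVec_smul_koszulRelation_mem_elemGL hn (C ∘ v') (X * dilate r f') k l) ?_ ?_
  · rw [map_one_add_vecMulVec_smul_koszulRelation, map_mul, dilate_X, C_0, zero_mul, zero_mul,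
      zero_smul, vecMulVec_zero, add_zero]
  · have hv : mapRingHom (algebraMap B R) ∘ (C ∘ v') = C (algebraMap B R s) • (C ∘ v) := by
      ext1 i
      simpa using congrArg C (congrFun hv' i)
    have hvr : dilate (algebraMap B R r) ∘ (C ∘ v) = C ∘ v := by
      ext1 i
      simp
    have hfr : mapRingHom (algebraMap B R) (dilate r f') =
        C (algebraMap B R t) * dilate (algebraMap B R r) f := by
      rw [← RingHom.comp_apply, mapRingHom_comp_dilate, RingHom.comp_apply, hf', map_mul, dilate_C]
    rw [map_one_add_vecMulVec_smul_koszulRelation, map_one_add_vecMulVec_smul_koszulRelation, hv,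
      hvr, vecMulVec_smul_smul_koszulRelation_smul, map_mul, map_mul, hfr, dilate_X,
      coe_mapRingHom, map_X]
    congr 3
    simp only [r, map_mul]
    ring

lemma one_add_vecMulVec_X_smul_mem_elemLifts (hn : 3 ≤ n) {v u : Fin n → R} (huv : u ⬝ᵥ v = 1)
    {w : Fin n → R[X]} (hwv : w ⬝ᵥ (C ∘ v) = 0) :
    1 + vecMulVec (C ∘ v) ((X : R[X]) • w) ∈ (elemLifts n M R).ofUnits := by
  have huvC : (C ∘ u) ⬝ᵥ (C ∘ v) = 1 := by rw [← RingHom.map_dotProduct, huv, map_one]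
  rw [eq_sum_smul_koszulRelation huvC hwv, Finset.smul_sum]
  simp only [smul_smul]
  refine one_add_vecMulVec_sum_right_mem _ _ _ _ (fun x _ ↦ ?_) fun x _ ↦ ?_
  · rw [smul_dotProduct, koszulRelation_dotProduct, smul_zero]
  · exact one_add_vecMulVec_X_mul_smul_koszulRelation_mem_elemLifts M hn _ _ _ _

lemma conj_transvection_X_mul_mem_elemLifts (hn : 3 ≤ n) (γ : GL (Fin n) R) {i j : Fin n}
    (hij : i ≠ j) (f : R[X]) :
    (glMap C γ : Matrix (Fin n) (Fin n) R[X]) * transvection i j (X * f) *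
        (((glMap C γ)⁻¹ : GL (Fin n) R[X]) : Matrix (Fin n) (Fin n) R[X]) ∈
      (elemLifts n M R).ofUnits := by
  have hrow (k l : Fin n) : ((γ⁻¹ : GL (Fin n) R) : Matrix (Fin n) (Fin n) R).row k ⬝ᵥ
      (γ : Matrix (Fin n) (Fin n) R).col l = (1 : Matrix (Fin n) (Fin n) R) k l := by
    rw [← γ.inv_mul]
    rfl
  rw [conj_transvection, mul_smul, ← map_inv]
  refine one_add_vecMulVec_X_smul_mem_elemLifts M hn
    (v := (γ : Matrix (Fin n) (Fin n) R).col i)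
    (u := ((γ⁻¹ : GL (Fin n) R) : Matrix (Fin n) (Fin n) R).row i) ?_ ?_
  · rw [hrow, one_apply_eq]
  · rw [smul_dotProduct]
    have := congrArg C ((hrow j i).trans (one_apply_ne hij.symm))
    rw [RingHom.map_dotProduct, C_0] at this
    exact (congrArg (f • ·) this).trans (smul_zero f)

lemma transvection_eq_mul_transvection_coeff_zero {i j : Fin n} (hij : i ≠ j) (a : R[X]) :
    transvection i j a = transvection i j (X * a.divX) * transvection i j (C (a.coeff 0)) := by
  rw [transvection_mul_transvection_same _ _ hij, X_mul_divX_add]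

/-- For `h = h₁ ⋯ h_m`, the quotient `h (r h)⁻¹` is the product of the conjugates of the
`h_k (r h_k)⁻¹` by `r (h₁ ⋯ h_{k-1})`. -/
lemma mul_map_inv_mem_of_mem_closure {G : Type*} [Group G] (r : G →* G) {N : Subgroup G}
    {S : Set G} (hS : ∀ x ∈ S, ∀ y, r y * (x * (r x)⁻¹) * (r y)⁻¹ ∈ N) {h : G}
    (hh : h ∈ Subgroup.closure S) : h * (r h)⁻¹ ∈ N := by
  suffices ∀ y, r y * (h * (r h)⁻¹) * (r y)⁻¹ ∈ N by simpa using this 1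
  induction hh using Subgroup.closure_induction with
  | mem x hx => exact hS x hx
  | one => simp
  | mul a b _ _ ha hb =>
    intro y
    convert mul_mem (ha y) (hb (y * a)) using 1
    simp only [map_mul]
    group
  | inv a _ ha =>
    intro y
    convert inv_mem (ha (y * a⁻¹)) using 1
    simp only [map_mul, map_inv]
    group

lemma conj_mul_glMap_dilate_zero_inv_mem_elemLifts (hn : 3 ≤ n) {x : GL (Fin n) R[X]}
    {i j : Fin n} (hij : i ≠ j) {a : R[X]}
    (hx : (x : Matrix (Fin n) (Fin n) R[X]) = transvection i j a) (y : GL (Fin n) R[X]) :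
    glMap (dilate 0) y * (x * (glMap (dilate 0) x)⁻¹) * (glMap (dilate 0) y)⁻¹ ∈
      elemLifts n M R := by
  have hquot : ((x * (glMap (dilate 0) x)⁻¹ : GL (Fin n) R[X]) : Matrix (Fin n) (Fin n) R[X]) =
      transvection i j (X * a.divX) := by
    rw [Units.val_mul, Units.mul_inv_eq_iff_eq_mul, coe_glMap, hx, map_transvection, dilate_zero,
      RingHom.comp_apply, coe_evalRingHom, ← coeff_zero_eq_eval_zero,
      ← transvection_eq_mul_transvection_coeff_zero hij]
  have hconj := conj_transvection_X_mul_mem_elemLifts M hn (glMap (evalRingHom 0) y) hij a.divX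
  rw [glMap_glMap, ← dilate_zero, ← hquot] at hconj
  exact Subgroup.mem_of_mem_val_ofUnits _ hconj

lemma mul_glMap_dilate_zero_inv_mem_elemLifts (hn : 3 ≤ n) {h : GL (Fin n) R[X]}
    (hh : h ∈ elemGL n R[X]) : h * (glMap (dilate 0) h)⁻¹ ∈ elemLifts n M R := by
  refine mul_map_inv_mem_of_mem_closure (glMap (dilate 0)) ?_ hh
  rintro x ⟨i, j, a, hij, hx⟩ y
  exact conj_mul_glMap_dilate_zero_inv_mem_elemLifts M hn hij hx y

theorem exists_glMap_dilate_mem_elemGL (hn : 3 ≤ n) {h : GL (Fin n) B[X]}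
    (h0 : glMap (dilate 0) h = 1)
    (hh : glMap (mapRingHom (algebraMap B R)) h ∈ elemGL n R[X]) :
    ∃ s ∈ M, glMap (dilate s) h ∈ elemGL n B[X] := by
  have hmap0 : glMap (dilate 0) (glMap (mapRingHom (algebraMap B R)) h) = 1 := by
    rw [glMap_glMap, ← map_zero (algebraMap B R), ← mapRingHom_comp_dilate, ← glMap_glMap, h0,
      map_one]
  have hlift := mul_glMap_dilate_zero_inv_mem_elemLifts M hn hh
  rw [hmap0, inv_one, mul_one] at hlift
  obtain ⟨s, hs, ε, ⟨hε, hε0⟩, hεh⟩ := hlift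
  rw [glMap_glMap, ← mapRingHom_comp_dilate, ← glMap_glMap] at hεh
  have h0s : glMap (dilate 0) ε = glMap (dilate 0) (glMap (dilate s) h) := by
    rw [glMap_glMap, dilate_comp_dilate, zero_mul, h0]
    exact hε0
  obtain ⟨t, ht, hεt⟩ := exists_glMap_dilate_eq_of_map_eq M hεh h0s
  refine ⟨t * s, mul_mem ht hs, ?_⟩
  rw [← dilate_comp_dilate, ← glMap_glMap, ← hεt]
  exact glMap_mem_elemGL _ hε

end ElementaryLifts

section Patching

variable {n : ℕ} {A L : Type*} [CommRing A] [CommRing L]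

/-- The substitution `X ↦ Y + Z` from `A[X]` to `A[Y][Z]`. -/
noncomputable def shift (A : Type*) [CommRing A] : A[X] →+* A[X][X] :=
  eval₂RingHom (C.comp C) (C X + X)

lemma mapRingHom_comp_shift (f : A →+* L) :
    (mapRingHom (mapRingHom f)).comp (shift A) = (shift L).comp (mapRingHom f) := by
  ext a <;> simp [shift]

lemma dilate_zero_comp_shift : (dilate 0).comp (shift A) = C :=
  ringHom_ext (fun _ ↦ by simp [shift]) (by simp [shift])

lemma dilate_comp_C (s : A) : (dilate s).comp C = C := RingHom.ext (dilate_C s)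

/-- The ideal of those `a : A` such that `g(bX)` modulo elementary matrices only depends on `b`
modulo `a`. -/
noncomputable def quillenIdeal (g : GL (Fin n) A[X]) : Ideal A where
  carrier := {a | ∀ b c : A,
    glMap (dilate (b + c * a)) g * (glMap (dilate b) g)⁻¹ ∈ elemGL n A[X]}
  zero_mem' b c := by
    rw [mul_zero, add_zero, mul_inv_cancel]
    exact one_mem _
  add_mem' {x y} hx hy b c := by
    have h := mul_mem (hy (b + c * x) c) (hx b c)
    rwa [mul_assoc, inv_mul_cancel_left, add_assoc, ← mul_add] at h
  smul_mem' r x hx b c := by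
    rw [smul_eq_mul, ← mul_assoc]
    exact hx b (c * r)

lemma exists_mem_quillenIdeal [Algebra A L] (M : Submonoid A) [IsLocalization M L] (hn : 3 ≤ n)
    {g : GL (Fin n) A[X]} (hg : glMap (mapRingHom (algebraMap A L)) g ∈ elemGL n L[X]) :
    ∃ s ∈ M, s ∈ quillenIdeal g := by
  let := Polynomial.algebra A L
  have : IsLocalization (M.map (C : A →+* A[X])) L[X] := Polynomial.isLocalization M L
  set h : GL (Fin n) A[X][X] := glMap (shift A) g * (glMap C g)⁻¹ with hh
  have h0 : glMap (dilate 0) h = 1 := by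
    rw [hh, map_mul, map_inv, glMap_glMap, glMap_glMap, dilate_zero_comp_shift, dilate_comp_C,
      mul_inv_cancel]
  have hloc : glMap (mapRingHom (algebraMap A[X] L[X])) h ∈ elemGL n L[X][X] := by
    change glMap (mapRingHom (mapRingHom (algebraMap A L))) h ∈ _
    rw [hh, map_mul, map_inv, glMap_glMap, glMap_glMap, mapRingHom_comp_shift, mapRingHom_comp_C,
      ← glMap_glMap, ← glMap_glMap]
    exact mul_mem (glMap_mem_elemGL _ hg) (inv_mem (glMap_mem_elemGL _ hg))
  obtain ⟨_, ⟨s, hs, rfl⟩, hmem⟩ :=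
    exists_glMap_dilate_mem_elemGL (M.map (C : A →+* A[X])) hn h0 hloc
  refine ⟨s, hs, fun b c ↦ ?_⟩
  -- Specialize `h(Y, sZ) = g(Y + sZ) g(Y)⁻¹` at `Y = bX`, `Z = cX`.
  let σ : A[X][X] →+* A[X] := eval₂RingHom (dilate b) (C c * X)
  have hshift : (σ.comp (dilate (C s))).comp (shift A) = dilate (b + c * s) := by
    refine ringHom_ext (fun a ↦ by simp [σ, shift]) ?_
    simp only [σ, shift, RingHom.comp_apply, coe_eval₂RingHom, eval₂_X, map_add, dilate_C,
      dilate_X, map_mul, eval₂_C]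
    ring
  have hC : (σ.comp (dilate (C s))).comp C = dilate b := by
    ext a <;> simp [σ]
  have hσ := glMap_mem_elemGL σ hmem
  rwa [hh, map_mul, map_inv, map_mul, map_inv, glMap_glMap, glMap_glMap, glMap_glMap, glMap_glMap,
    hshift, hC] at hσ

lemma quillenIdeal_eq_top (hn : 3 ≤ n) {g : GL (Fin n) A[X]}
    (hloc : ∀ (m : Ideal A) [m.IsMaximal],
      glMap (mapRingHom (algebraMap A (Localization.AtPrime m))) g ∈
        elemGL n (Localization.AtPrime m)[X]) :
    quillenIdeal g = ⊤ := by
  by_contra hne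
  obtain ⟨m, hm, hle⟩ := Ideal.exists_le_maximal _ hne
  obtain ⟨s, hs, hmem⟩ := exists_mem_quillenIdeal m.primeCompl hn (hloc m)
  exact hs (hle hmem)

end Patching

theorem suslin_local_global_unital_general (n : ℕ) (hn : 3 ≤ n) (A : Type*) [CommRing A]
    (g : GL (Fin n) A[X])
    (hloc : ∀ (m : Ideal A) [m.IsMaximal],
      glMap (mapRingHom (algebraMap A (Localization.AtPrime m))) g ∈
        elemGL n (Localization.AtPrime m)[X]) :
    g * (glMap C (glMap (evalRingHom (0 : A)) g))⁻¹ ∈ elemGL n A[X] := by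
  have h1 : (1 : A) ∈ quillenIdeal g := quillenIdeal_eq_top hn hloc ▸ Submodule.mem_top
  have h := h1 0 1
  rwa [mul_one, zero_add, dilate_one, dilate_zero, ← glMap_glMap] at h

/-- Suslin's local-global principle, case `g(0) = 1`: if `g(X) ∈ GL_n(A[X])` has `g(0) = 1`
and becomes elementary over `A_m[X]` for every maximal ideal `m`, then `g(X) ∈ E_n(A[X])`. -/
theorem suslin_local_global_unital (n : ℕ) (hn : 3 ≤ n) (A : Type*) [CommRing A]
    (g : GL (Fin n) (Polynomial A))
    (h0 : glMap (Polynomial.evalRingHom (0 : A)) g = 1)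
    (hloc : ∀ (m : Ideal A) (hm : m.IsMaximal),
      haveI : m.IsPrime := hm.isPrime
      glMap (Polynomial.mapRingHom (algebraMap A (Localization.AtPrime m))) g ∈
        elemGL n (Polynomial (Localization.AtPrime m))) :
    g ∈ elemGL n (Polynomial A) := by
  simpa [h0] using suslin_local_global_unital_general n hn A g fun m hm ↦ hloc m hm
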